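/- Let f be a standard solution family, set ω = e^{2πi/5}, α = e^{iπ/10}, ψ₊(z,λ) = f(α·z, −α^{−2}·λ) and ψ₋(z,λ) = f(−α^{−1}·z, −α²·λ). If λ ∈ ℂ is an eigenvalue of the imaginary cubic oscillator, then ψ₋(z,λ) = −ω·ψ₊(z,λ) for all z ∈ ℂ, and moreover f(ω·z, ω³·λ) + ω·f(ω^{−1}·z, ω^{−3}·λ) = 0 for all z ∈ ℂ (that is, the Stokes coefficient C(λ) vanishes). -/

import Mathlib

open Complex MeasureTheory

/-- `lam` is an eigenvalue of the imaginary cubic oscillator `H = p² + i x³`. -/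
def IsEigenvalueICO (lam : ℂ) : Prop :=
  ∃ ψ : ℝ → ℂ, ψ ≠ 0 ∧ ContDiff ℝ 2 ψ ∧
    Integrable (fun x : ℝ => ‖ψ x‖ ^ 2) ∧
    ∀ x : ℝ, -(deriv (deriv ψ) x) + Complex.I * (x : ℂ) ^ 3 * ψ x = lam * ψ x

/-- `f : ℂ × ℂ → ℂ` is a standard solution family for `f'' = (z³ + λ) f`:
for each `λ` the map `z ↦ f(z,λ)` is entire and solves the ODE, and it has the
Liouville–Green asymptotics `f(z,λ) = z^{-3/4} e^{-(2/5) z^{5/2}} (1 + O(z^{-1/2}))`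
as `z → ∞` in the sector `|arg z| ≤ 3π/5 - ε`, uniformly for `λ` in compact sets. -/
def IsStdSolutionFamily (f : ℂ → ℂ → ℂ) : Prop :=
  (∀ lam : ℂ, Differentiable ℂ (fun z => f z lam) ∧
    ∀ z : ℂ, deriv (deriv (fun w => f w lam)) z = (z ^ 3 + lam) * f z lam) ∧
  (∀ ε > (0 : ℝ), ∀ L : Set ℂ, IsCompact L →
    ∃ C > (0 : ℝ), ∃ R > (0 : ℝ), ∀ lam ∈ L, ∀ z : ℂ,
      R ≤ ‖z‖ → |Complex.arg z| ≤ 3 * Real.pi / 5 - ε →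
      ‖(f z lam * z ^ ((3 : ℂ) / 4) *
          Complex.exp ((2 / 5 : ℂ) * z ^ ((5 : ℂ) / 2)) - 1)‖
        ≤ C * ‖z‖ ^ (-(1 / 2) : ℝ))

/-- Decay of the standard solution in the closed sector `|arg z| ≤ π/5`. -/
lemma std_decay (f : ℂ → ℂ → ℂ) (hf : IsStdSolutionFamily f) (μ : ℂ) :
    ∀ η > (0 : ℝ), ∃ R > (0 : ℝ), ∀ z : ℂ, R ≤ ‖z‖ → |Complex.arg z| ≤ Real.pi / 5 →
      ‖f z μ‖ ≤ η := by
  intro η hη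
  obtain ⟨C, hC, R, hR, h⟩ := hf.2 (Real.pi / 5) (by positivity) {μ} isCompact_singleton
  have ht : Filter.Tendsto (fun x : ℝ => (1 + C) * x ^ (-(3 / 4 : ℝ))) Filter.atTop
      (nhds ((1 + C) * 0)) :=
    (tendsto_rpow_neg_atTop (by norm_num)).const_mul _
  rw [mul_zero] at ht
  obtain ⟨R', hR'⟩ := Filter.eventually_atTop.1 (ht.eventually (ge_mem_nhds hη))
  refine ⟨max (max R 1) R', lt_of_lt_of_le hR ((le_max_left _ _).trans (le_max_left _ _)), ?_⟩
  intro z hz harg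
  have hzR : R ≤ ‖z‖ := ((le_max_left _ _).trans (le_max_left _ _)).trans hz
  have hz1 : 1 ≤ ‖z‖ := ((le_max_right _ _).trans (le_max_left _ _)).trans hz
  have hzR' : R' ≤ ‖z‖ := (le_max_right _ _).trans hz
  have hz0 : z ≠ 0 := by
    rintro rfl
    simp at hz1
    linarith
  have h1 := h μ rfl z hzR (harg.trans (by linarith [Real.pi_pos]))
  have h2 : ‖z‖ ^ (-(1 / 2) : ℝ) ≤ 1 := Real.rpow_le_one_of_one_le_of_nonpos hz1 (by norm_num)
  have h3 : ‖f z μ * z ^ ((3 : ℂ) / 4) * Complex.exp ((2 / 5 : ℂ) * z ^ ((5 : ℂ) / 2))‖ ≤ 1 + C := by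
    have := norm_le_norm_add_norm_sub' (f z μ * z ^ ((3 : ℂ) / 4) *
      Complex.exp ((2 / 5 : ℂ) * z ^ ((5 : ℂ) / 2))) 1
    rw [norm_one] at this
    nlinarith
  have h4 : ‖z ^ ((3 : ℂ) / 4)‖ = ‖z‖ ^ (3 / 4 : ℝ) := by
    rw [show ((3 : ℂ) / 4) = ((3 / 4 : ℝ) : ℂ) by push_cast; rfl, Complex.norm_cpow_real]
  have h5 : 1 ≤ ‖Complex.exp ((2 / 5 : ℂ) * z ^ ((5 : ℂ) / 2))‖ := by
    rw [Complex.norm_exp, Real.one_le_exp_iff]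
    have : ((2 / 5 : ℂ) * z ^ ((5 : ℂ) / 2)).re = 2 / 5 * (‖z‖ ^ (5 / 2 : ℝ) *
        Real.cos (z.arg * (5 / 2))) := by
      rw [show (2 / 5 : ℂ) = ((2 / 5 : ℝ) : ℂ) by push_cast; rfl, Complex.re_ofReal_mul,
        show ((5 : ℂ) / 2) = ((5 / 2 : ℝ) : ℂ) by push_cast; rfl, Complex.cpow_ofReal_re]
    rw [this]
    have hc : 0 ≤ Real.cos (z.arg * (5 / 2)) := by
      rw [abs_le] at harg
      apply Real.cos_nonneg_of_neg_pi_div_two_le_of_le <;> linarith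
    positivity
  rw [norm_mul, norm_mul, h4] at h3
  have hp : 0 < ‖z‖ ^ (3 / 4 : ℝ) := Real.rpow_pos_of_pos (by linarith) _
  have h6 : ‖f z μ‖ * ‖z‖ ^ (3 / 4 : ℝ) ≤ 1 + C :=
    (le_mul_of_one_le_right (by positivity) h5).trans h3
  calc ‖f z μ‖ ≤ (1 + C) * ‖z‖ ^ (-(3 / 4 : ℝ)) := by
        rw [Real.rpow_neg (by linarith), ← div_eq_mul_inv, le_div_iff₀ hp]
        exact h6
    _ ≤ η := hR' _ hzR'

/-- The second derivative equation along a ray, and decay of function and derivative. -/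
lemma ray_decay (f : ℂ → ℂ → ℂ) (hf : IsStdSolutionFamily f) (μ β : ℂ) (hβn : ‖β‖ = 1)
    (hβ : |Complex.arg β| < Real.pi / 5) :
    Filter.Tendsto (fun x : ℝ => f (β * x) μ) Filter.atTop (nhds 0) ∧
    Filter.Tendsto (fun x : ℝ => deriv (fun w => f w μ) (β * x)) Filter.atTop (nhds 0) := by
  have hβs : β ∈ Complex.slitPlane := by
    rw [Complex.mem_slitPlane_iff_arg]
    constructor
    · intro h
      rw [h, abs_of_pos Real.pi_pos] at hβ
      linarith [Real.pi_pos]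
    · intro h
      simp [h] at hβn
  have key : ∀ η > (0 : ℝ), ∀ᶠ x : ℝ in Filter.atTop, ∀ w : ℂ, ‖w - β * x‖ ≤ 1 → ‖f w μ‖ ≤ η := by
    intro η hη
    obtain ⟨R, hR, h⟩ := std_decay f hf μ η hη
    have hcont : ∀ᶠ v in nhds β, |Complex.arg v| < Real.pi / 5 :=
      ((Complex.continuousAt_arg hβs).abs).eventually (gt_mem_nhds hβ)
    obtain ⟨δ, hδ, hball⟩ := Metric.eventually_nhds_iff.1 hcont
    filter_upwards [Filter.eventually_gt_atTop (1 / δ), Filter.eventually_gt_atTop 0,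
      Filter.eventually_ge_atTop (R + 1)] with x hx1 hx0 hxR w hw
    apply h
    · have : ‖β * x‖ = x := by simp [hβn, abs_of_pos hx0]
      have := norm_le_norm_add_norm_sub w (β * x)
      linarith
    · have hx0' : (x : ℂ) ≠ 0 := by exact_mod_cast hx0.ne'
      have e : w = (x : ℂ) * (w / x) := by field_simp
      rw [e, Complex.arg_real_mul _ hx0]
      apply le_of_lt
      apply hball
      rw [dist_eq_norm, show w / x - β = (w - β * x) / x by field_simp, norm_div]
      rw [Complex.norm_real, Real.norm_eq_abs, abs_of_pos hx0, div_lt_iff₀ hx0]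
      rw [div_lt_iff₀ hδ] at hx1
      linarith
  constructor
  · rw [Metric.tendsto_nhds]
    intro η hη
    filter_upwards [key (η / 2) (by positivity)] with x hx
    rw [dist_zero_right]
    have := hx (β * x) (by simp)
    linarith
  · rw [Metric.tendsto_nhds]
    intro η hη
    filter_upwards [key (η / 2) (by positivity)] with x hx
    rw [dist_zero_right]
    have := Complex.norm_deriv_le_of_forall_mem_sphere_norm_le (c := β * x) (R := 1)
      (f := fun w => f w μ) (C := η / 2) one_pos ((hf.1 μ).1.diffContOnCl)
      (fun z hz => hx z (by rw [mem_sphere_iff_norm] at hz; exact hz.le))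
    linarith

/-- An `L²` solution has vanishing Wronskian with a solution decaying at `+∞`. -/
lemma wronskian_zero (q ψ ψ' u u' : ℝ → ℂ)
    (hψ : ∀ x, HasDerivAt ψ (ψ' x) x) (hψ' : ∀ x, HasDerivAt ψ' (q x * ψ x) x)
    (hu : ∀ x, HasDerivAt u (u' x) x) (hu' : ∀ x, HasDerivAt u' (q x * u x) x)
    (hL2 : Integrable (fun x : ℝ => ‖ψ x‖ ^ 2))
    (hu0 : Filter.Tendsto u Filter.atTop (nhds 0))
    (hu'0 : Filter.Tendsto u' Filter.atTop (nhds 0)) :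
    ∀ x, ψ x * u' x - ψ' x * u x = 0 := by
  have hconst : ∀ x y, ψ x * u' x - ψ' x * u x = ψ y * u' y - ψ' y * u y := by
    have hd : ∀ x, HasDerivAt (fun x => ψ x * u' x - ψ' x * u x) 0 x := by
      intro x
      refine (((hψ x).mul (hu' x)).sub ((hψ' x).mul (hu x))).congr_deriv ?_
      ring
    exact is_const_of_deriv_eq_zero (fun x => (hd x).differentiableAt) (fun x => (hd x).deriv)
  intro x0
  set W := ψ x0 * u' x0 - ψ' x0 * u x0 with hW
  have cψ : Continuous ψ := continuous_iff_continuousAt.2 fun x => (hψ x).continuousAt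
  have cψ' : Continuous ψ' := continuous_iff_continuousAt.2 fun x => (hψ' x).continuousAt
  have cu : Continuous u := continuous_iff_continuousAt.2 fun x => (hu x).continuousAt
  have cu' : Continuous u' := continuous_iff_continuousAt.2 fun x => (hu' x).continuousAt
  -- main identity
  have hid : ∀ n : ℝ, W * (1 / 6) = ∫ x in n..(n + 1),
      ψ x * (2 * (((x - n) * (n + 1 - x) : ℝ) : ℂ) * u' x + ((2 * n + 1 - 2 * x : ℝ) : ℂ) * u x) := by
    intro n
    -- antiderivative
    have hF : ∀ x ∈ Set.uIcc n (n + 1), HasDerivAt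
        (fun x : ℝ => (((x - n) * (n + 1 - x) : ℝ) : ℂ) * (ψ x * u x) +
          W * (((x - n) ^ 2 / 2 - (x - n) ^ 3 / 3 : ℝ) : ℂ))
        (ψ x * (2 * (((x - n) * (n + 1 - x) : ℝ) : ℂ) * u' x +
          ((2 * n + 1 - 2 * x : ℝ) : ℂ) * u x)) x := by
      intro x _
      have hφ : HasDerivAt (fun x : ℝ => (x - n) * (n + 1 - x)) (2 * n + 1 - 2 * x) x := by
        refine (((hasDerivAt_id x).sub_const n).mul ((hasDerivAt_id x).const_sub (n + 1))).congr_deriv ?_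
        simp only [id]; ring
      have hΦ : HasDerivAt (fun x : ℝ => (x - n) ^ 2 / 2 - (x - n) ^ 3 / 3)
          ((x - n) * (n + 1 - x)) x := by
        refine (((((hasDerivAt_id x).sub_const n).pow 2).div_const 2).sub
          ((((hasDerivAt_id x).sub_const n).pow 3).div_const 3)).congr_deriv ?_
        simp only [id]; push_cast; ring
      refine ((hφ.ofReal_comp.mul ((hψ x).mul (hu x))).add (hΦ.ofReal_comp.const_mul W)).congr_deriv ?_
      rw [hW, hconst x0 x, Pi.mul_apply]
      push_cast
      ring
    rw [intervalIntegral.integral_eq_sub_of_hasDerivAt hF]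
    · push_cast
      ring
    · apply Continuous.intervalIntegrable
      fun_prop
  by_contra hne
  have hWpos : 0 < ‖W‖ := norm_pos_iff.2 hne
  set I := ∫ x, ‖ψ x‖ ^ 2 with hI
  have hI0 : 0 ≤ I := integral_nonneg fun x => by positivity
  set η := ‖W‖ / (12 * (3 * (1 + I))) with hη
  have hηpos : 0 < η := by positivity
  have e1 : ∀ᶠ x in Filter.atTop, ‖u x‖ < η := by
    simpa using (Metric.tendsto_nhds.1 hu0 η hηpos)
  have e2 : ∀ᶠ x in Filter.atTop, ‖u' x‖ < η := by
    simpa using (Metric.tendsto_nhds.1 hu'0 η hηpos)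
  obtain ⟨n, hn⟩ := Filter.eventually_atTop.1 (e1.and e2)
  have hb : ‖W * (1 / 6)‖ ≤ ∫ x in n..(n + 1), (3 * η) * (1 + ‖ψ x‖ ^ 2) := by
    rw [hid n]
    apply intervalIntegral.norm_integral_le_of_norm_le (by linarith)
    · refine Filter.Eventually.of_forall fun x hx => ?_
      obtain ⟨h1, h2⟩ := hn x hx.1.le
      have hx1 := hx.1
      have hx2 := hx.2
      have a1 : ‖(((x - n) * (n + 1 - x) : ℝ) : ℂ)‖ ≤ 1 := by
        rw [Complex.norm_real, Real.norm_eq_abs, abs_le]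
        constructor <;> nlinarith
      have a2 : ‖((2 * n + 1 - 2 * x : ℝ) : ℂ)‖ ≤ 1 := by
        rw [Complex.norm_real, Real.norm_eq_abs, abs_le]
        constructor <;> linarith
      have a3 : ‖2 * (((x - n) * (n + 1 - x) : ℝ) : ℂ) * u' x +
          ((2 * n + 1 - 2 * x : ℝ) : ℂ) * u x‖ ≤ 3 * η := by
        refine (norm_add_le _ _).trans ?_
        rw [norm_mul, norm_mul, norm_mul, Complex.norm_ofNat]
        have b1 := mul_le_mul a1 h2.le (norm_nonneg _) zero_le_one
        have b2 := mul_le_mul a2 h1.le (norm_nonneg _) zero_le_one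
        linarith
      have a4 : ‖ψ x‖ ≤ 1 + ‖ψ x‖ ^ 2 := by nlinarith [sq_nonneg (‖ψ x‖ - 1), norm_nonneg (ψ x)]
      rw [norm_mul, mul_comm (3 * η)]
      exact mul_le_mul a4 a3 (norm_nonneg _) (by positivity)
    · apply Continuous.intervalIntegrable
      fun_prop
  have hb2 : ∫ x in n..(n + 1), (3 * η) * (1 + ‖ψ x‖ ^ 2) ≤ 3 * η * (1 + I) := by
    rw [intervalIntegral.integral_const_mul, intervalIntegral.integral_add (by simp)
      (hL2.intervalIntegrable)]
    have : ∫ x in n..(n + 1), ‖ψ x‖ ^ 2 ≤ I := by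
      rw [intervalIntegral.integral_of_le (by linarith)]
      exact setIntegral_le_integral hL2 (Filter.Eventually.of_forall fun x => by positivity)
    have h1 : ∫ x in n..(n + 1), (1 : ℝ) = 1 := by simp
    rw [h1]
    gcongr
  have hb3 : 3 * η * (1 + I) = ‖W‖ / 12 := by
    rw [hη]
    field_simp
  have hb4 : ‖W * (1 / 6)‖ = ‖W‖ * (1 / 6) := by rw [norm_mul]; norm_num
  linarith

/-- Real-variable derivatives of `x ↦ f (β x) μ`. -/
lemma ray_deriv (f : ℂ → ℂ → ℂ) (hf : IsStdSolutionFamily f) (μ β : ℂ) (z : ℂ) :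
    HasDerivAt (fun z : ℂ => f (β * z) μ) (β * deriv (fun w => f w μ) (β * z)) z ∧
    HasDerivAt (fun z : ℂ => β * deriv (fun w => f w μ) (β * z))
      (β ^ 2 * ((β * z) ^ 3 + μ) * f (β * z) μ) z := by
  have hm : HasDerivAt (fun z : ℂ => β * z) β z := by
    simpa using (hasDerivAt_id z).const_mul β
  have hd := (hf.1 μ).1
  constructor
  · have := ((hd (β * z)).hasDerivAt).comp z hm
    rw [mul_comm]
    exact this
  · have hd2 : Differentiable ℂ (deriv (fun w => f w μ)) := fun w =>
      ((hd.analyticAt w).deriv).differentiableAt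
    have := (((hd2 (β * z)).hasDerivAt).comp z hm).const_mul β
    rw [(hf.1 μ).2] at this
    refine this.congr_deriv ?_
    ring

/-- Polar form of the normalised limit on the rays `arg z = θ`. -/
lemma ray_limit (f : ℂ → ℂ → ℂ) (hf : IsStdSolutionFamily f) (μ : ℂ) (θ : ℝ)
    (hθ : |θ| ≤ 2 * Real.pi / 5) :
    Filter.Tendsto (fun r : ℝ => f (r * Complex.exp (θ * I)) μ *
      Complex.exp (3 / 4 * (Real.log r + θ * I)) *
      Complex.exp (2 / 5 * Complex.exp (5 / 2 * (Real.log r + θ * I)))) Filter.atTop (nhds 1) := by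
  obtain ⟨C, hC, R, hR, h⟩ := hf.2 (Real.pi / 5) (by positivity) {μ} isCompact_singleton
  have ht : Filter.Tendsto (fun x : ℝ => C * x ^ (-(1 / 2 : ℝ))) Filter.atTop
      (nhds (C * 0)) :=
    (tendsto_rpow_neg_atTop (by norm_num)).const_mul _
  rw [mul_zero] at ht
  rw [tendsto_iff_norm_sub_tendsto_zero]
  refine squeeze_zero' (Filter.Eventually.of_forall fun _ => norm_nonneg _) ?_ ht
  filter_upwards [Filter.eventually_ge_atTop R] with r hr
  have hr0 : 0 < r := by linarith
  have hpi := Real.pi_pos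
  rw [abs_le] at hθ
  have hlog : Complex.log (r * Complex.exp (θ * I)) = Real.log r + θ * I := by
    rw [Complex.log_ofReal_mul hr0 (Complex.exp_ne_zero _), Complex.log_exp] <;> simp <;> linarith
  have hne : (r * Complex.exp (θ * I) : ℂ) ≠ 0 :=
    mul_ne_zero (by exact_mod_cast hr0.ne') (Complex.exp_ne_zero _)
  have hn : ‖(r * Complex.exp (θ * I) : ℂ)‖ = r := by
    rw [norm_mul, Complex.norm_exp_ofReal_mul_I]
    simp [abs_of_pos hr0]
  have harg : Complex.arg (r * Complex.exp (θ * I)) = θ := by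
    rw [← Complex.log_im, hlog]; simp
  have := h μ rfl (r * Complex.exp (θ * I)) (by rw [hn]; exact hr)
    (by rw [harg, abs_le]; constructor <;> linarith)
  rw [hn, Complex.cpow_def_of_ne_zero hne, Complex.cpow_def_of_ne_zero hne, hlog] at this
  rw [mul_comm (3 / 4 : ℂ), mul_comm (5 / 2 : ℂ)]
  exact this

/-- If `λ` is an eigenvalue then `ψ₋ = -ω ψ₊` and the Stokes coefficient vanishes:
`f₋(z,λ) + ω f₊(z,λ) = 0`. -/
theorem eigenvalue_stokes_vanishes (f : ℂ → ℂ → ℂ) (hf : IsStdSolutionFamily f)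
    (ω : ℂ) (hω : ω = Complex.exp (2 * Real.pi * Complex.I / 5))
    (α : ℂ) (hα : α = Complex.exp (Real.pi * Complex.I / 10))
    (ψp ψm : ℂ → ℂ → ℂ)
    (hψp : ψp = fun z lam => f (α * z) (-(α ^ 2)⁻¹ * lam))
    (hψm : ψm = fun z lam => f (-α⁻¹ * z) (-α ^ 2 * lam))
    (lam : ℂ) (hlam : IsEigenvalueICO lam) :
    (∀ z : ℂ, ψm z lam = -ω * ψp z lam) ∧
    (∀ z : ℂ, f (ω * z) (ω ^ 3 * lam) + ω * f (ω⁻¹ * z) ((ω⁻¹) ^ 3 * lam) = 0) := by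
  have hα' : α = Complex.exp ((Real.pi / 10 : ℝ) * I) := by
    rw [hα]; congr 1; push_cast; ring
  have hαi : α⁻¹ = Complex.exp ((-(Real.pi / 10) : ℝ) * I) := by
    rw [hα', ← Complex.exp_neg]; congr 1; push_cast; ring
  have hα0 : α ≠ 0 := by rw [hα]; exact Complex.exp_ne_zero _
  have hpi := Real.pi_pos
  have hα5 : α ^ 5 = I := by
    rw [hα, ← Complex.exp_nat_mul]
    refine Eq.trans ?_ Complex.exp_pi_div_two_mul_I
    congr 1; push_cast; ring
  have hω0 : ω ≠ 0 := by rw [hω]; exact Complex.exp_ne_zero _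
  have hωα : ω = α ^ 4 := by
    rw [hω, hα, ← Complex.exp_nat_mul]
    congr 1; push_cast; ring
  have hα10 : α ^ 10 = -1 := by
    rw [show α ^ 10 = (α ^ 5) ^ 2 by ring, hα5, Complex.I_sq]
  have hnα : ‖α‖ = 1 := by rw [hα', Complex.norm_exp_ofReal_mul_I]
  have hnαi : ‖α⁻¹‖ = 1 := by rw [hαi, Complex.norm_exp_ofReal_mul_I]
  have haα : |Complex.arg α| < Real.pi / 5 := by
    rw [hα', Complex.arg_exp_mul_I, toIocMod_eq_self _ |>.2 ⟨by linarith, by linarith⟩,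
      abs_of_pos (by positivity)]
    linarith
  have haαi : |Complex.arg α⁻¹| < Real.pi / 5 := by
    rw [hαi, Complex.arg_exp_mul_I, toIocMod_eq_self _ |>.2 ⟨by linarith, by linarith⟩, abs_neg,
      abs_of_pos (by positivity)]
    linarith
  set μp : ℂ := -(α ^ 2)⁻¹ * lam with hμp
  set μm : ℂ := -α ^ 2 * lam with hμm
  set P : ℂ → ℂ := fun z => f (α * z) μp with hP
  set M : ℂ → ℂ := fun z => f (-α⁻¹ * z) μm with hM
  set P' : ℂ → ℂ := fun z => α * deriv (fun w => f w μp) (α * z) with hP'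
  set M' : ℂ → ℂ := fun z => -α⁻¹ * deriv (fun w => f w μm) (-α⁻¹ * z) with hM'
  have hqp : ∀ z : ℂ, α ^ 2 * ((α * z) ^ 3 + μp) = I * z ^ 3 - lam := by
    intro z
    rw [hμp, ← hα5]
    field_simp
    ring
  have hαinv5 : (α⁻¹) ^ 5 = -I := by
    rw [inv_pow, hα5, Complex.inv_I]
  have hqm : ∀ z : ℂ, (α⁻¹) ^ 2 * ((α⁻¹ * z) ^ 3 + μm) = -I * z ^ 3 - lam := by
    intro z
    rw [hμm, ← hαinv5]
    field_simp
    ring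
  have dP : ∀ z, HasDerivAt P (P' z) z := fun z => (ray_deriv f hf μp α z).1
  have dP' : ∀ z, HasDerivAt P' ((I * z ^ 3 - lam) * P z) z := fun z => by
    rw [← hqp]; exact (ray_deriv f hf μp α z).2
  have dM : ∀ z, HasDerivAt M (M' z) z := fun z => (ray_deriv f hf μm (-α⁻¹) z).1
  have dM' : ∀ z, HasDerivAt M' ((I * z ^ 3 - lam) * M z) z := fun z => by
    have h := (ray_deriv f hf μm (-α⁻¹) z).2
    have e : (-α⁻¹) ^ 2 * ((-α⁻¹ * z) ^ 3 + μm) = I * z ^ 3 - lam := by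
      have := hqm (-z)
      calc _ = (α⁻¹) ^ 2 * ((α⁻¹ * -z) ^ 3 + μm) := by ring
        _ = -I * (-z) ^ 3 - lam := this
        _ = _ := by ring
    rw [e] at h
    exact h
  obtain ⟨ψ, hψ0, hψc, hL2, hode⟩ := hlam
  have dψ : ∀ x, HasDerivAt ψ (deriv ψ x) x := fun x =>
    ((hψc.differentiable (by norm_num)) x).hasDerivAt
  have dψ' : ∀ x : ℝ, HasDerivAt (deriv ψ) ((I * (x : ℂ) ^ 3 - lam) * ψ x) x := by
    intro x
    have h1 : ContDiff ℝ 1 (deriv ψ) := by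
      have : ContDiff ℝ (1 + 1) ψ := by simpa [one_add_one_eq_two] using hψc
      exact (contDiff_succ_iff_deriv.1 this).2.2
    refine ((h1.differentiable (by norm_num)) x).hasDerivAt.congr_deriv ?_
    have := hode x
    linear_combination -this
  obtain ⟨x0, hx0⟩ := Function.ne_iff.1 hψ0
  rw [Pi.zero_apply] at hx0
  have w1 : ψ x0 * P' x0 - deriv ψ x0 * P x0 = 0 := by
    obtain ⟨t1, t2⟩ := ray_decay f hf μp α hnα haα
    refine wronskian_zero (fun x => I * (x : ℂ) ^ 3 - lam) ψ (deriv ψ) (fun x => P x)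
      (fun x => P' x) dψ dψ' (fun x => (dP x).comp_ofReal) (fun x => (dP' x).comp_ofReal) hL2 t1
      ?_ x0
    simpa using t2.const_mul α
  have w2 : ψ x0 * M' x0 - deriv ψ x0 * M x0 = 0 := by
    obtain ⟨t1, t2⟩ := ray_decay f hf μm α⁻¹ hnαi haαi
    have t3 : Filter.Tendsto (fun x : ℝ => α⁻¹ * deriv (fun w => f w μm) (α⁻¹ * x))
        Filter.atTop (nhds 0) := by
      simpa using t2.const_mul α⁻¹
    have := wronskian_zero (fun x => -I * (x : ℂ) ^ 3 - lam) (fun x => ψ (-x))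
      (fun x => -deriv ψ (-x)) (fun x => f (α⁻¹ * x) μm)
      (fun x => α⁻¹ * deriv (fun w => f w μm) (α⁻¹ * x)) ?_ ?_ ?_ ?_ hL2.comp_neg t1 t3 (-x0)
    · simp only [neg_neg, Complex.ofReal_neg] at this
      simp only [hM', hM]
      rw [show -α⁻¹ * (x0 : ℂ) = α⁻¹ * -x0 by ring]
      linear_combination -this
    · intro x
      exact ((dψ (-x)).scomp x (hasDerivAt_neg x)).congr_deriv (by simp)
    · intro x
      refine (((dψ' (-x)).scomp x (hasDerivAt_neg x)).neg).congr_deriv ?_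
      rw [neg_one_smul, neg_neg]
      push_cast
      ring
    · intro x
      exact (ray_deriv f hf μm α⁻¹ x).1.comp_ofReal
    · intro x
      have h := (ray_deriv f hf μm α⁻¹ x).2.comp_ofReal
      rw [hqm] at h
      exact h
  have wc : ∀ z, M z * P' z - M' z * P z = 0 := by
    have hd : ∀ z, HasDerivAt (fun z => M z * P' z - M' z * P z) 0 z := by
      intro z
      refine (((dM z).mul (dP' z)).sub ((dM' z).mul (dP z))).congr_deriv ?_
      ring
    intro z
    have := is_const_of_deriv_eq_zero (fun z => (hd z).differentiableAt)
      (fun z => (hd z).deriv) z x0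
    rw [this]
    apply mul_left_cancel₀ hx0
    linear_combination M x0 * w1 - P x0 * w2
  -- limits along the negative imaginary axis
  have lM := ray_limit f hf μm (2 * Real.pi / 5) (by rw [abs_of_pos (by positivity)])
  have lP := ray_limit f hf μp (-(2 * Real.pi / 5)) (by rw [abs_neg, abs_of_pos (by positivity)])
  have rM : ∀ r : ℝ, (r : ℂ) * Complex.exp ((2 * Real.pi / 5 : ℝ) * I) = -α⁻¹ * (-I * r) := by
    intro r
    have : Complex.exp ((2 * Real.pi / 5 : ℝ) * I) = α ^ 4 := by
      rw [← hωα, hω]; congr 1; push_cast; ring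
    rw [this, ← hα5]
    field_simp
  have rP : ∀ r : ℝ, (r : ℂ) * Complex.exp ((-(2 * Real.pi / 5) : ℝ) * I) = α * (-I * r) := by
    intro r
    have : Complex.exp ((-(2 * Real.pi / 5) : ℝ) * I) = (α ^ 4)⁻¹ := by
      rw [← hωα, hω, ← Complex.exp_neg]; congr 1; push_cast; ring
    rw [this, ← hα5]
    field_simp
    linear_combination (r : ℂ) * hα10
  have hexM : ∀ r : ℝ, Complex.exp (5 / 2 * (Real.log r + (2 * Real.pi / 5 : ℝ) * I)) =
      -Complex.exp (5 / 2 * Real.log r) := by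
    intro r
    rw [show (5 / 2 * (Real.log r + (2 * Real.pi / 5 : ℝ) * I) : ℂ) =
      5 / 2 * Real.log r + Real.pi * I by push_cast; ring, Complex.exp_add, Complex.exp_pi_mul_I]
    ring
  have hexP : ∀ r : ℝ, Complex.exp (5 / 2 * (Real.log r + (-(2 * Real.pi / 5) : ℝ) * I)) =
      -Complex.exp (5 / 2 * Real.log r) := by
    intro r
    rw [show (5 / 2 * (Real.log r + (-(2 * Real.pi / 5) : ℝ) * I) : ℂ) =
      5 / 2 * Real.log r + -(Real.pi * I) by push_cast; ring, Complex.exp_add, Complex.exp_neg,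
      Complex.exp_pi_mul_I]
    norm_num
  have hexq : ∀ r : ℝ, Complex.exp (3 / 4 * (Real.log r + (2 * Real.pi / 5 : ℝ) * I)) =
      α ^ 6 * Complex.exp (3 / 4 * (Real.log r + (-(2 * Real.pi / 5) : ℝ) * I)) := by
    intro r
    rw [hα, ← Complex.exp_nat_mul, ← Complex.exp_add]
    congr 1; push_cast; ring
  simp only [rM, hexM, hexq] at lM
  simp only [rP, hexP] at lP
  obtain ⟨z0, hz0⟩ : ∃ z0, P z0 ≠ 0 := by
    obtain ⟨r, hr⟩ := (lP.eventually_ne one_ne_zero).exists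
    exact ⟨-I * r, fun h => hr (by
      have h' : f (α * (-I * r)) μp = 0 := h
      rw [h']; simp)⟩
  have cP : Differentiable ℂ P := fun z => (dP z).differentiableAt
  have cM : Differentiable ℂ M := fun z => (dM z).differentiableAt
  obtain ⟨δ, hδ, hball⟩ := Metric.eventually_nhds_iff_ball.1 ((cP z0).continuousAt.eventually_ne hz0)
  set c := M z0 / P z0 with hc
  have hloc : ∀ z ∈ Metric.ball z0 δ, M z = c * P z := by
    intro z hz
    have hd : ∀ z ∈ Metric.ball z0 δ, HasDerivAt (fun z => M z / P z) 0 z := by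
      intro z hz
      refine ((dM z).div (dP z) (hball z hz)).congr_deriv ?_
      rw [show M' z * P z - M z * P' z = 0 by linear_combination -wc z, zero_div]
    have := Metric.isOpen_ball.is_const_of_deriv_eq_zero
      (convex_ball z0 δ).isPreconnected
      (fun z hz => (hd z hz).differentiableAt.differentiableWithinAt)
      (fun z hz => (hd z hz).deriv) hz (Metric.mem_ball_self hδ)
    rw [hc, ← this, div_mul_cancel₀ _ (hball z hz)]
  have hglob : ∀ z, M z = c * P z := by
    have a1 : AnalyticOnNhd ℂ M Set.univ := fun z _ => cM.analyticAt z
    have a2 : AnalyticOnNhd ℂ (fun z => c * P z) Set.univ := fun z _ =>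
      (cP.const_mul c).analyticAt z
    have := a1.eq_of_eventuallyEq a2 (z₀ := z0)
      (Filter.eventually_of_mem (Metric.ball_mem_nhds z0 hδ) hloc)
    exact fun z => congrFun this z
  have hcω : c = -ω := by
    have l2 := lP.const_mul (c * α ^ 6)
    have := tendsto_nhds_unique (lM.congr fun r => by
      have h' : f (-α⁻¹ * (-I * r)) μm = c * f (α * (-I * r)) μp := hglob (-I * r)
      rw [h']
      calc _ = (c * α ^ 6) * (f (α * (-I * r)) μp *
        Complex.exp (3 / 4 * (Real.log r + (-(2 * Real.pi / 5) : ℝ) * I)) *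
        Complex.exp (2 / 5 * -Complex.exp (5 / 2 * Real.log r))) := by ring) l2
    rw [hωα]
    linear_combination α ^ 4 * this + c * hα10
  have first : ∀ z, M z = -ω * P z := by rw [← hcω]; exact hglob
  have hω5 : ω ^ 5 = 1 := by
    rw [hωα, show (α ^ 4) ^ 5 = (α ^ 10) ^ 2 by ring, hα10]; norm_num
  refine ⟨fun z => by rw [hψm, hψp]; exact first z, fun z => ?_⟩
  have h1 := first (-(α * ω) * z)
  simp only [hM, hP] at h1
  have e1 : -α⁻¹ * (-(α * ω) * z) = ω * z := by field_simp
  have e2 : α * (-(α * ω) * z) = ω⁻¹ * z := by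
    rw [hωα]
    field_simp
    linear_combination (-z) * hα10
  have e3 : μm = ω ^ 3 * lam := by
    rw [hμm, hωα]
    linear_combination (-α ^ 2 * lam) * hα10
  have e4 : μp = (ω⁻¹) ^ 3 * lam := by
    rw [hμp, hωα]
    field_simp
    linear_combination (-lam) * hα10
  rw [e1, e2, e3, e4] at h1
  rw [h1]
  ring
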